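/- arXiv:1503.02487 — 2 statements merged into one kernel-verified Lean document; each statement's English description precedes it below -/
import Mathlib

section
/- For all 0 ≤ i ≤ n−2 and 1 ≤ j ≤ n−i−1, one has (q̄_{X_i})_j·(q̄_{X_{i+1}})_j − (q̄_{X_i})_{j+1}·(q̄_{X_{i+1}})_{j−1} = 1. -/
/-!
Along the Hirzebruch–Jung division, both the remainders `q_i, q_{i+1}, …` and the continuants
`K_0 = 0, K_1 = 1, …` of the coefficients `c_{i+1}, c_{i+2}, …` solve the second-order recurrence
`u_{m+2} = c_{i+m+1} u_{m+1} - u_m`, and the Casoratian `u_{m+1} v_m - u_m v_{m+1}` of two solutions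
is constant. The Casoratian of continuants and remainders is `q_i`, and as the `K_m` increase while
the remainders decrease, this forces `0 < K_m ≤ q_i`. Since also `q_{i+1} K_m ≡ q_{i+m}` modulo
`q_i`, and `q_{i+1}` is invertible modulo `q_i`, the continuant `K_m` is the least positive solution
`(q̄_{X_i})_m` of this congruence. The minor is then, up to a shift of the index, the Casoratian of
the continuants of `X_i` and of `X_{i+1}`, so it is equal to its value `1` at `j = 1`.
-/

section CommRing

variable {R : Type*} [CommRing R] {c u v : ℕ → R} {N m : ℕ}

/-- The entries `u 0, …, u (N + 1)` solve the recurrence of Hirzebruch–Jung division. The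
coefficients are indexed from `0`, so `c m` is the coefficient `c_{m+1}` of the literature. -/
def IsHJSolution (c u : ℕ → R) (N : ℕ) : Prop :=
  ∀ m < N, u (m + 2) = c m * u (m + 1) - u m

/-- The continuants of Hirzebruch–Jung continued fractions: for `m ≥ 1`, `hjContinuant c m` is the
numerator of `[c 0, …, c (m - 2)] = c 0 - 1 / (c 1 - 1 / ⋯)`, the empty fraction having
numerator `1`. -/
def hjContinuant (c : ℕ → R) : ℕ → R
  | 0 => 0
  | 1 => 1
  | m + 2 => c m * hjContinuant c (m + 1) - hjContinuant c m

lemma isHJSolution_hjContinuant (c : ℕ → R) (N : ℕ) : IsHJSolution c (hjContinuant c) N :=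
  fun _ _ => rfl

namespace IsHJSolution

lemma shift {i n : ℕ} (hu : IsHJSolution c u n) (h : i + N ≤ n) :
    IsHJSolution (fun k => c (i + k)) (fun k => u (i + k)) N :=
  fun m _ => hu (i + m) (by lia)

lemma casoratian_eq (hu : IsHJSolution c u N) (hv : IsHJSolution c v N) (hm : m ≤ N) :
    u (m + 1) * v m - u m * v (m + 1) = u 1 * v 0 - u 0 * v 1 := by
  induction m with
  | zero => rfl
  | succ m ih =>
    rw [← ih (by lia), hu m hm, hv m hm]
    ring

lemma apply_succ_eq (hu : IsHJSolution c u N) (hm : m ≤ N) :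
    u (m + 1) = u 1 * hjContinuant c (m + 1) - u 0 * hjContinuant (fun k => c (k + 1)) m := by
  induction m using Nat.twoStepInduction with
  | zero => simp [hjContinuant]
  | one =>
    simp only [hu 0 hm, hjContinuant]
    ring
  | more m ih₀ ih₁ =>
    have hK : hjContinuant c (m + 3) =
        c (m + 1) * hjContinuant c (m + 2) - hjContinuant c (m + 1) := rfl
    have hKtail : hjContinuant (fun k => c (k + 1)) (m + 2) =
        c (m + 1) * hjContinuant (fun k => c (k + 1)) (m + 1) -
          hjContinuant (fun k => c (k + 1)) m := rfl
    rw [hu (m + 1) hm, ih₀ (by lia), ih₁ (by lia), hK, hKtail]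
    ring

lemma dvd_mul_hjContinuant_sub (hu : IsHJSolution c u N) (hm : m ≤ N) :
    u 0 ∣ u 1 * hjContinuant c (m + 1) - u (m + 1) :=
  ⟨hjContinuant (fun k => c (k + 1)) m, by rw [hu.apply_succ_eq hm]; ring⟩

lemma isCoprime_of_apply_succ_eq_one (hu : IsHJSolution c u N) (hm : m ≤ N)
    (h : u (m + 1) = 1) : IsCoprime (u 0) (u 1) :=
  ⟨-hjContinuant (fun k => c (k + 1)) m, hjContinuant c (m + 1), by
    linear_combination h - hu.apply_succ_eq hm⟩

end IsHJSolution

lemma hjContinuant_minor (c : ℕ → R) (m : ℕ) :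
    hjContinuant c (m + 1) * hjContinuant (fun k => c (k + 1)) (m + 1) -
      hjContinuant c (m + 2) * hjContinuant (fun k => c (k + 1)) m = 1 := by
  have hshift : IsHJSolution (fun k => c (k + 1)) (fun k => hjContinuant c (k + 1)) m :=
    fun _ _ => rfl
  have := (isHJSolution_hjContinuant _ m).casoratian_eq hshift le_rfl
  simp only [hjContinuant] at this ⊢
  linear_combination this

end CommRing

section OrderedRing

variable {R : Type*} [CommRing R] [LinearOrder R] [IsStrictOrderedRing R] {c u : ℕ → R} {N m : ℕ}

lemma hjContinuant_nonneg_and_lt_succ (hc : ∀ k < N, 2 ≤ c k) (hm : m ≤ N) :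
    0 ≤ hjContinuant c m ∧ hjContinuant c m < hjContinuant c (m + 1) := by
  induction m with
  | zero => simp [hjContinuant]
  | succ m ih =>
    obtain ⟨hnonneg, hlt⟩ := ih (by lia)
    have hpos : 0 < hjContinuant c (m + 1) := hnonneg.trans_lt hlt
    refine ⟨hpos.le, ?_⟩
    calc hjContinuant c (m + 1)
        < 2 * hjContinuant c (m + 1) - hjContinuant c m := by linarith
      _ ≤ c m * hjContinuant c (m + 1) - hjContinuant c m := by gcongr; exact hc m hm

lemma hjContinuant_succ_pos (hc : ∀ k < N, 2 ≤ c k) (hm : m ≤ N) : 0 < hjContinuant c (m + 1) :=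
  have ⟨hnonneg, hlt⟩ := hjContinuant_nonneg_and_lt_succ hc hm
  hnonneg.trans_lt hlt

lemma IsHJSolution.hjContinuant_le (hu : IsHJSolution c u N) (hc : ∀ k < N, 2 ≤ c k)
    (hm : m ≤ N) (hnonneg : 0 ≤ u m) (hgap : u (m + 1) + 1 ≤ u m) : hjContinuant c m ≤ u 0 := by
  obtain ⟨hK, hlt⟩ := hjContinuant_nonneg_and_lt_succ hc hm
  calc hjContinuant c m
      ≤ hjContinuant c m * (u m - u (m + 1)) := le_mul_of_one_le_right hK (by linarith)
    _ = hjContinuant c m * u m - hjContinuant c m * u (m + 1) := mul_sub ..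
    _ ≤ hjContinuant c (m + 1) * u m - hjContinuant c m * u (m + 1) := by gcongr
    _ = u 0 := by simpa [hjContinuant] using (isHJSolution_hjContinuant c N).casoratian_eq hu hm

end OrderedRing

lemma isLeast_pos_and_dvd_mul_sub {a b r x : ℤ} (hab : IsCoprime a b) (hpos : 0 < x) (hle : x ≤ a)
    (hx : a ∣ b * x - r) : IsLeast {t : ℤ | 0 < t ∧ a ∣ b * t - r} x := by
  refine ⟨⟨hpos, hx⟩, fun t ⟨ht, htr⟩ => ?_⟩
  have hdvd : a ∣ x - t := by
    refine hab.dvd_of_dvd_mul_left ?_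
    simpa [mul_sub] using dvd_sub hx htr
  by_contra! hlt
  have := Int.le_of_dvd (sub_pos.mpr hlt) hdvd
  lia

lemma IsHJSolution.isLeast_hjContinuant {c u : ℕ → ℤ} {N m : ℕ} (hu : IsHJSolution c u N)
    (hc : ∀ k < N, 2 ≤ c k) (hdec : ∀ k ≤ N, u (k + 1) < u k) (hN : u N = 1) (hm : m + 1 ≤ N) :
    IsLeast {t : ℤ | 0 < t ∧ u 0 ∣ u 1 * t - u (m + 1)} (hjContinuant c (m + 1)) := by
  have hanti : StrictAntiOn u (Set.Iic N) := strictAntiOn_Iic_of_succ_lt fun k hk => hdec k hk.le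
  have hnonneg : 0 ≤ u (m + 1) := by
    have := hanti.antitoneOn hm Set.self_mem_Iic hm
    lia
  have hcop : IsCoprime (u 0) (u 1) := by
    obtain ⟨M, rfl⟩ : ∃ M, N = M + 1 := Nat.exists_eq_succ_of_ne_zero (by lia)
    exact hu.isCoprime_of_apply_succ_eq_one M.le_succ hN
  exact isLeast_pos_and_dvd_mul_sub hcop (hjContinuant_succ_pos hc (by lia))
    (hu.hjContinuant_le hc hm hnonneg (hdec _ hm)) (hu.dvd_mul_hjContinuant_sub (by lia))

/-- **Hirzebruch–Jung data** of `d/q` for coprime `d > q ≥ 1`: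
`q_0 = d > q_1 = q > ⋯ > q_n = 1 > q_{n+1} = 0`, `c_i ≥ 2` with
`q_{i-1} = c_i q_i − q_{i+1}`; `q̄_i` is the smallest positive integer with
`q·q̄_i ≡ q_i (mod d)` (and `q̄_0 = 0`, `q̄_{n+1} = d`).
For `0 ≤ i ≤ n−1`: `(q̄_{X_i})_0 = 0`, for `1 ≤ m ≤ n−i` the number `(q̄_{X_i})_m`
is the smallest positive integer `t` with `q_{i+1}·t ≡ q_{i+m} (mod q_i)`, and
`(q̄_{X_i})_{n+1−i} = q_i`.

**Statement:** for all `0 ≤ i ≤ n−2` and `1 ≤ j ≤ n−i−1`,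
`(q̄_{X_i})_j·(q̄_{X_{i+1}})_j − (q̄_{X_i})_{j+1}·(q̄_{X_{i+1}})_{j−1} = 1`. -/
theorem qbarX_two_by_two_minor
    (n : ℕ) (d q : ℤ) (Q C Qbar : ℕ → ℤ) (QbarX : ℕ → ℕ → ℤ)
    (hn : 1 ≤ n) (hq1 : 1 ≤ q) (hqd : q < d) (hcop : Int.gcd d q = 1)
    (hQ0 : Q 0 = d) (hQ1 : Q 1 = q) (hQn : Q n = 1) (hQtop : Q (n + 1) = 0)
    (hQdec : ∀ i, i ≤ n → Q (i + 1) < Q i)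
    (hC : ∀ i, 1 ≤ i → i ≤ n → Q (i - 1) = C i * Q i - Q (i + 1))
    (hC2 : ∀ i, 1 ≤ i → i ≤ n → 2 ≤ C i)
    (hQbar0 : Qbar 0 = 0) (hQbarTop : Qbar (n + 1) = d)
    (hQbarPos : ∀ i, 1 ≤ i → i ≤ n → 0 < Qbar i)
    (hQbarCong : ∀ i, 1 ≤ i → i ≤ n → d ∣ q * Qbar i - Q i)
    (hQbarMin : ∀ i, 1 ≤ i → i ≤ n → ∀ t : ℤ, 0 < t → d ∣ q * t - Q i → Qbar i ≤ t)
    (hX0 : ∀ i, i + 1 ≤ n → QbarX i 0 = 0)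
    (hXtop : ∀ i, i + 1 ≤ n → QbarX i (n + 1 - i) = Q i)
    (hXpos : ∀ i m, i + 1 ≤ n → 1 ≤ m → m ≤ n - i → 0 < QbarX i m)
    (hXcong : ∀ i m, i + 1 ≤ n → 1 ≤ m → m ≤ n - i →
      Q i ∣ Q (i + 1) * QbarX i m - Q (i + m))
    (hXmin : ∀ i m, i + 1 ≤ n → 1 ≤ m → m ≤ n - i →
      ∀ t : ℤ, 0 < t → Q i ∣ Q (i + 1) * t - Q (i + m) → QbarX i m ≤ t) :
    ∀ i j, i + 2 ≤ n → 1 ≤ j → j + i + 1 ≤ n →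
      QbarX i j * QbarX (i + 1) j - QbarX i (j + 1) * QbarX (i + 1) (j - 1) = 1 := by
  have hsol : IsHJSolution (fun k => C (k + 1)) Q n := fun k hk => by
    have hdiv : Q k = C (k + 1) * Q (k + 1) - Q (k + 2) := hC (k + 1) k.succ_pos hk
    linear_combination hdiv
  have hcont : ∀ i m, i + 1 ≤ n → i + m ≤ n →
      QbarX i m = hjContinuant (fun k => C (i + k + 1)) m := by
    rintro i (_ | m) hi hm
    · exact hX0 i hi
    have hleast : IsLeast {t : ℤ | 0 < t ∧ Q i ∣ Q (i + 1) * t - Q (i + (m + 1))}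
        (QbarX i (m + 1)) :=
      ⟨⟨hXpos i _ hi (by lia) (by lia), hXcong i _ hi (by lia) (by lia)⟩,
        fun t ht => hXmin i _ hi (by lia) (by lia) t ht.1 ht.2⟩
    have hin : i + (n - i) = n := by lia
    exact hleast.unique <| (hsol.shift hin.le).isLeast_hjContinuant
      (fun k _ => hC2 _ (by lia) (by lia)) (fun k _ => hQdec (i + k) (by lia))
      (by rw [hin, hQn]) (by lia)
  rintro i (_ | m) hi hj hij
  · contradiction
  have hshift : (fun k => C (i + 1 + k + 1)) = fun k => C (i + (k + 1) + 1) := by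
    funext k; congr 1; lia
  rw [hcont i _ (by lia) (by lia), hcont i _ (by lia) (by lia), hcont (i + 1) _ hi (by lia),
    hcont (i + 1) _ hi (by lia), hshift]
  exact hjContinuant_minor (fun k => C (i + k + 1)) m
end

section
/- Let 0 < k < d with greedy X-decomposition (k_1, …, k_n) and set ‖k‖₁ := Σ_i k_i. Let w := d − 1 − q and let k' be the residue of k + w modulo d. Then the set difference 𝕃(k') \ (𝕃(k) ⊕ 𝕃(w)) — where ⊕ denotes the Minkowski sum of subsets of ℤ≥0² — is finite and has exactly ‖k‖₁ − 1 elements. (This is the combinatorial core of the structure theorem 𝓜^nul_f = 𝒪_X(k) ⊗ 𝒪_X(w) for the LR-logarithmic eigenmodule of a generic germ f of degree k: it says dim_ℂ 𝒪_X(k+w)/(𝒪_X(k)⊗𝒪_X(w)) = ‖k‖₁ − 1.) -/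
/-!
The minimal points of `𝕃(k)` for the product order are the minimal generators of `𝒪_X(k)`. A point
`p` of `𝕃(k + w)` lies outside `𝕃(k) ⊕ 𝕃(w)` exactly when no point of `𝕃(k)` is `≤ p`; as
`w = d - 1 - q`, translating by `(1, 1)` turns these `p` into the generators of `𝕃(k)` off the
two axes.

The generators are met, by increasing second coordinate, by running the greedy algorithm from
`(k, 0)`. Let `p_0 = 0`, `p_1 = 1`, `p_{i+1} = c_i p_i - p_{i-1}`, so that `q_i ≡ q p_i (mod d)`.
The vectors `(q_i, p_i)`, `(q_{i+1}, p_{i+1})` form a basis of `{(x, y) : x ≡ q y (mod d)}`, and it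
follows that every `x ≥ 0` congruent to some `q y` with `0 < y < p_{i+1}` is at least `q_i`.
Therefore the generator after `(a, b)`, where `q_{i+1} ≤ a < q_i`, is
`(a - q_{i+1}, b + p_{i+1})`: each coin spent moves one generator on, up to the one on the axis
`a = 0`.
-/

open Pointwise

/-- The remainders of the greedy change-making algorithm for the coin system
`Q 0, Q 1, …`: `r_0 = k % Q 0` and `r_{i+1} = r_i % Q (i+1)`. -/
def hjRem (Q : ℕ → ℤ) (k : ℤ) : ℕ → ℤ
  | 0 => k % Q 0
  | i + 1 => hjRem Q k i % Q (i + 1)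

/-- The greedy digits for the coin system `Q 0, Q 1, …`:
`g_0 = ⌊k / Q 0⌋` and `g_{i+1} = ⌊r_i / Q (i+1)⌋`.  For `0 ≤ k < d = Q 0`
the digits at indices `1, …, n` form the greedy `X`-decomposition of `k`. -/
def hjGreedy (Q : ℕ → ℤ) (k : ℤ) : ℕ → ℤ
  | 0 => k / Q 0
  | i + 1 => hjRem Q k i / Q (i + 1)

/-- The affine lattice `𝕃(m) = {(r,s) ∈ ℤ≥0² : r + q·s ≡ m (mod d)}`. -/
def latt (d q m : ℤ) : Set (ℤ × ℤ) :=
  {rs : ℤ × ℤ | 0 ≤ rs.1 ∧ 0 ≤ rs.2 ∧ d ∣ rs.1 + q * rs.2 - m}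

section Generators

variable {d q k : ℤ}

lemma latt_emod (m : ℤ) : latt d q (m % d) = latt d q m := by
  ext p
  have h : d ∣ p.1 + q * p.2 - m % d ↔ d ∣ p.1 + q * p.2 - m := by
    rw [← dvd_sub_left (Int.dvd_self_sub_emod (x := m))]
    ring_nf
  exact and_congr_right' (and_congr_right' h)

lemma gcd_dvd_fst_of_mem_latt (hk : (Int.gcd d q : ℤ) ∣ k) {p : ℤ × ℤ} (hp : p ∈ latt d q k) :
    (Int.gcd d q : ℤ) ∣ p.1 := by
  have hclass : (Int.gcd d q : ℤ) ∣ p.1 + q * p.2 - k := (Int.gcd_dvd_left d q).trans hp.2.2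
  rwa [dvd_sub_left hk, dvd_add_left ((Int.gcd_dvd_right d q).mul_right p.2)] at hclass

lemma mem_latt_add_latt_iff {m : ℤ} {p : ℤ × ℤ} (hp : p ∈ latt d q (k + m)) :
    p ∈ latt d q k + latt d q m ↔ ∃ g ∈ latt d q k, g ≤ p := by
  constructor
  · rintro ⟨g, hg, r, ⟨hr₁, hr₂, -⟩, rfl⟩
    exact ⟨g, hg, le_add_of_nonneg_right ⟨hr₁, hr₂⟩⟩
  · rintro ⟨g, hg, hgp⟩
    have hdvd : d ∣ (p.1 - g.1) + q * (p.2 - g.2) - m :=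
      (dvd_sub hp.2.2 hg.2.2).trans (dvd_of_eq (by ring))
    exact ⟨g, hg, p - g, ⟨sub_nonneg.mpr hgp.1, sub_nonneg.mpr hgp.2, hdvd⟩, add_sub_cancel g p⟩

/-- The minimal points of `𝕃(k)` for the product order. They are the exponents of the minimal
generators of the module `𝒪_X(k)`. -/
def lattGens (d q k : ℤ) : Set (ℤ × ℤ) :=
  {p | Minimal (· ∈ latt d q k) p}

lemma fst_lt_of_mem_lattGens (hd : 0 < d) {p : ℤ × ℤ} (hp : p ∈ lattGens d q k) : p.1 < d := by
  by_contra! hle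
  have hmem : (p.1 - d, p.2) ∈ latt d q k :=
    ⟨sub_nonneg.mpr hle, hp.prop.2.1,
      (dvd_sub_self_right.mpr hp.prop.2.2).trans (dvd_of_eq (by ring))⟩
  have hge : p.1 ≤ p.1 - d := (hp.le_of_le hmem ⟨sub_le_self _ hd.le, le_rfl⟩).1
  omega

/-- The distance `a - x` is a multiple of `d`, so first coordinates may be reduced modulo
`a - x`. -/
lemma exists_mem_latt_lt_of_mem_row {x a b : ℤ} (hx : (x, b) ∈ latt d q k)
    (ha : (a, b) ∈ latt d q k) (hxa : x < a) (hb : 0 < b) :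
    ∃ g ∈ latt d q k, g.1 < a ∧ g.2 < b := by
  have hperiod : d ∣ a - x := (dvd_sub ha.2.2 hx.2.2).trans (dvd_of_eq (by ring))
  have hm : 0 < a - x := sub_pos.mpr hxa
  have hlt : (a + q) % (a - x) < a := (Int.emod_lt_of_pos _ hm).trans_le (sub_le_self a hx.1)
  have hclass : d ∣ (a + q) % (a - x) + q * (b - 1) - k :=
    (dvd_sub ha.2.2 (hperiod.trans (Int.dvd_self_sub_emod (x := a + q)))).trans
      (dvd_of_eq (by ring))
  exact ⟨((a + q) % (a - x), b - 1),
    ⟨Int.emod_nonneg _ hm.ne', Int.le_sub_one_of_lt hb, hclass⟩, hlt, sub_one_lt b⟩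

/-- All first coordinates in `𝕃(k)` are multiples of `e = gcd d q`, so the next column to the left
that can meet `𝕃(k)` is `a - e`. Bézout's identity gives it a point, possibly too high or negative,
and second coordinates may be reduced modulo `b - y`. -/
lemma exists_mem_latt_lt_of_mem_column (hk : (Int.gcd d q : ℤ) ∣ k) {a y b : ℤ}
    (hy : (a, y) ∈ latt d q k) (hb : (a, b) ∈ latt d q k) (hyb : y < b) (ha : 0 < a) :
    ∃ g ∈ latt d q k, g.1 < a ∧ g.2 < b := by
  have hperiod : d ∣ q * (b - y) := (dvd_sub hb.2.2 hy.2.2).trans (dvd_of_eq (by ring))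
  have hbezout : (Int.gcd d q : ℤ) = d * Int.gcdA d q + q * Int.gcdB d q := Int.gcd_eq_gcd_ab d q
  have hea : (Int.gcd d q : ℤ) ∣ a := gcd_dvd_fst_of_mem_latt hk hb
  set t := Int.gcdB d q
  set e := (Int.gcd d q : ℤ)
  have he : 0 < e := (Int.natCast_nonneg _).lt_of_ne fun h0 => ha.ne' (zero_dvd_iff.mp (h0 ▸ hea))
  have hm : 0 < b - y := sub_pos.mpr hyb
  have hlt : (b + t) % (b - y) < b := (Int.emod_lt_of_pos _ hm).trans_le (sub_le_self b hy.2.1)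
  have hemod : d ∣ q * (b + t - (b + t) % (b - y)) :=
    hperiod.trans (mul_dvd_mul_left q Int.dvd_self_sub_emod)
  have hclass : d ∣ a - e + q * ((b + t) % (b - y)) - k :=
    (dvd_sub (dvd_sub hb.2.2 hemod) (dvd_mul_right d (Int.gcdA d q))).trans
      (dvd_of_eq (by linear_combination hbezout))
  exact ⟨(a - e, (b + t) % (b - y)),
    ⟨sub_nonneg.mpr (Int.le_of_dvd ha hea), Int.emod_nonneg _ hm.ne', hclass⟩,
    sub_lt_self a he, hlt⟩

lemma mem_lattGens_of_forall_not_lt (hk : (Int.gcd d q : ℤ) ∣ k) {p : ℤ × ℤ}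
    (hp : p ∈ latt d q k) (h₁ : 0 < p.1) (h₂ : 0 < p.2)
    (hmin : ∀ g ∈ latt d q k, ¬ (g.1 < p.1 ∧ g.2 < p.2)) : p ∈ lattGens d q k := by
  refine ⟨hp, fun g hg hgp => ?_⟩
  obtain ⟨a, b⟩ := p
  obtain ⟨x, y⟩ := g
  rcases (show x ≤ a from hgp.1).eq_or_lt with rfl | hxa
  · rcases (show y ≤ b from hgp.2).eq_or_lt with rfl | hyb
    · exact le_rfl
    · obtain ⟨g, hg, hlt⟩ := exists_mem_latt_lt_of_mem_column hk hg hp hyb h₁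
      exact absurd hlt (hmin g hg)
  · rcases (show y ≤ b from hgp.2).eq_or_lt with rfl | hyb
    · obtain ⟨g, hg, hlt⟩ := exists_mem_latt_lt_of_mem_row hg hp hxa h₂
      exact absurd hlt (hmin g hg)
    · exact absurd ⟨hxa, hyb⟩ (hmin _ hg)

lemma vadd_latt_sdiff_eq (hk : (Int.gcd d q : ℤ) ∣ k) :
    ((1, 1) : ℤ × ℤ) +ᵥ (latt d q (k + (d - 1 - q)) \
        (latt d q k + latt d q (d - 1 - q))) =
      {p ∈ lattGens d q k | 0 < p.1 ∧ 0 < p.2} := by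
  have hclass : ∀ x y : ℤ,
      d ∣ x - 1 + q * (y - 1) - (k + (d - 1 - q)) ↔ d ∣ x + q * y - k := fun x y => by
    rw [← dvd_sub_self_right (b := x + q * y - k)]
    ring_nf
  ext ⟨x, y⟩
  rw [Set.mem_vadd_set_iff_neg_vadd_mem,
    show -((1, 1) : ℤ × ℤ) +ᵥ (x, y) = (x - 1, y - 1) by simp [sub_eq_neg_add]]
  constructor
  · rintro ⟨hp, hnot⟩
    rw [mem_latt_add_latt_iff hp] at hnot
    obtain ⟨hx, hy, hdvd⟩ := hp
    have hx' : 0 < x := Int.lt_of_le_sub_one hx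
    have hy' : 0 < y := Int.lt_of_le_sub_one hy
    refine ⟨mem_lattGens_of_forall_not_lt hk ⟨hx'.le, hy'.le, (hclass x y).mp hdvd⟩ hx' hy' ?_,
      hx', hy'⟩
    rintro g hg ⟨hgx, hgy⟩
    exact hnot ⟨g, hg, Int.le_sub_one_of_lt hgx, Int.le_sub_one_of_lt hgy⟩
  · rintro ⟨hgen, hx, hy⟩
    have hp : (x - 1, y - 1) ∈ latt d q (k + (d - 1 - q)) :=
      ⟨Int.le_sub_one_of_lt hx, Int.le_sub_one_of_lt hy, (hclass x y).mpr hgen.prop.2.2⟩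
    refine ⟨hp, ?_⟩
    rw [mem_latt_add_latt_iff hp]
    rintro ⟨g, hg, hgx, hgy⟩
    have hle : x ≤ g.1 := (hgen.le_of_le hg
      ⟨hgx.trans (sub_le_self x zero_le_one), hgy.trans (sub_le_self y zero_le_one)⟩).1
    exact (Int.lt_of_le_sub_one hgx).not_ge hle

end Generators

section GreedyWalk

variable {d q k a b N Q' Q P : ℤ}

/-- The pair `(Q, P)` with `Q ≡ q P (mod d)` is a greedy coin for remainders below `Q'`: a
nonnegative integer congruent to some `q y` with `0 < y < P` is at least `Q'`. Spending the coin
moves a point of `𝕃(k)` by `(-Q, P)`. -/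
structure IsGreedyCoin (d q Q' Q P : ℤ) : Prop where
  value_pos : 0 < Q
  shift_pos : 0 < P
  dvd : d ∣ Q - q * P
  le_of_dvd : ∀ ⦃x y : ℤ⦄, 0 ≤ x → 0 < y → y < P → d ∣ x - q * y → Q' ≤ x

/-- The greedy algorithm, having spent `N` coins, has reached the generator `(a, b)` of `𝕃(k)`, so
that `a` is the current remainder, and exactly `N` generators lie in the rows below. -/
structure IsGreedyState (d q k N a b : ℤ) : Prop where
  mem : (a, b) ∈ lattGens d q k
  finite : {p ∈ lattGens d q k | p.2 < b}.Finite
  ncard : ({p ∈ lattGens d q k | p.2 < b}.ncard : ℤ) = N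

lemma le_of_dvd_sub_of_lt {x r : ℤ} (hx : 0 ≤ x) (hr : r < d) (h : d ∣ x - r) : r ≤ x := by
  by_contra! hlt
  have := Int.le_of_dvd (sub_pos.mpr hlt) (dvd_sub_comm.mp h)
  omega

lemma IsGreedyState.initial (hd : 0 < d) (k : ℤ) : IsGreedyState d q k 0 (k % d) 0 := by
  have hmem : (k % d, 0) ∈ latt d q k := by
    refine ⟨Int.emod_nonneg k hd.ne', le_rfl, ?_⟩
    exact (dvd_sub_comm.mp (Int.dvd_self_sub_emod (x := k) (m := d))).trans (dvd_of_eq (by ring))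
  have hempty : {p ∈ lattGens d q k | p.2 < 0} = ∅ :=
    Set.eq_empty_of_forall_notMem fun p hp => hp.1.prop.2.1.not_gt hp.2
  refine ⟨⟨hmem, ?_⟩, by simp [hempty], by simp [hempty]⟩
  rintro ⟨x, y⟩ ⟨hx, hy, hdvd⟩ ⟨-, hy'⟩
  obtain rfl : y = 0 := le_antisymm hy' hy
  refine ⟨le_of_dvd_sub_of_lt hx (Int.emod_lt_of_pos k hd) ?_, le_rfl⟩
  exact (dvd_add hdvd (Int.dvd_self_sub_emod (x := k))).trans (dvd_of_eq (by ring))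

/-- In the rows up to `b` a point to the left of `(a, b)` would contradict its minimality, and in
the next rows it would contradict `IsGreedyCoin.le_of_dvd`. -/
lemma IsGreedyCoin.add_le_snd (hcoin : IsGreedyCoin d q Q' Q P) (hab : (a, b) ∈ lattGens d q k)
    (ha : a < Q') {p : ℤ × ℤ} (hp : p ∈ latt d q k) (hpa : p.1 < a) : b + P ≤ p.2 := by
  by_contra! hlt
  rcases le_or_gt p.2 b with hle | hgt
  · exact (hab.le_of_le hp ⟨hpa.le, hle⟩).1.not_gt hpa
  · have hp₁ : 0 ≤ p.1 := hp.1
    have hdvd : d ∣ a - p.1 - q * (p.2 - b) :=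
      (dvd_sub hab.prop.2.2 hp.2.2).trans (dvd_of_eq (by ring))
    have := hcoin.le_of_dvd (sub_nonneg.mpr hpa.le) (sub_pos.mpr hgt) (by omega) hdvd
    omega

lemma IsGreedyCoin.sub_add_mem_lattGens (hcoin : IsGreedyCoin d q Q' Q P) (hd : 0 < d)
    (hab : (a, b) ∈ lattGens d q k) (hQa : Q ≤ a) (ha : a < Q') :
    (a - Q, b + P) ∈ lattGens d q k := by
  have had : a - Q < d :=
    (sub_lt_self a hcoin.value_pos).trans (fst_lt_of_mem_lattGens hd hab)
  have hmem : (a - Q, b + P) ∈ latt d q k := by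
    refine ⟨sub_nonneg.mpr hQa, add_nonneg hab.prop.2.1 hcoin.shift_pos.le, ?_⟩
    exact (dvd_sub hab.prop.2.2 hcoin.dvd).trans (dvd_of_eq (by ring))
  refine ⟨hmem, ?_⟩
  rintro ⟨x, y⟩ hp ⟨hx, hy⟩
  have hxa : x < a := hx.trans_lt (sub_lt_self a hcoin.value_pos)
  obtain rfl : y = b + P := hy.antisymm (hcoin.add_le_snd hab ha hp hxa)
  refine ⟨le_of_dvd_sub_of_lt hp.1 had ?_, le_rfl⟩
  exact (dvd_sub hp.2.2 hmem.2.2).trans (dvd_of_eq (by ring))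

lemma IsGreedyCoin.setOf_snd_lt_add (hcoin : IsGreedyCoin d q Q' Q P)
    (hab : (a, b) ∈ lattGens d q k) (ha : a < Q') :
    {p ∈ lattGens d q k | p.2 < b + P} = insert (a, b) {p ∈ lattGens d q k | p.2 < b} := by
  ext p
  constructor
  · rintro ⟨hp, hlt⟩
    rcases lt_or_ge p.2 b with hpb | hpb
    · exact Or.inr ⟨hp, hpb⟩
    · have hpa : a ≤ p.1 := by
        by_contra! hpa
        exact (hcoin.add_le_snd hab ha hp.prop hpa).not_gt hlt
      exact Or.inl (hp.eq_of_ge hab.prop ⟨hpa, hpb⟩)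
  · have hP := hcoin.shift_pos
    rintro (rfl | ⟨hp, hpb⟩)
    · exact ⟨hab, lt_add_of_pos_right b hP⟩
    · exact ⟨hp, by omega⟩

lemma IsGreedyState.spend (hstate : IsGreedyState d q k N a b)
    (hcoin : IsGreedyCoin d q Q' Q P) (hd : 0 < d) (hQa : Q ≤ a) (ha : a < Q') :
    IsGreedyState d q k (N + 1) (a - Q) (b + P) := by
  have hrows := hcoin.setOf_snd_lt_add hstate.mem ha
  refine ⟨hcoin.sub_add_mem_lattGens hd hstate.mem hQa ha, ?_, ?_⟩
  · rw [hrows]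
    exact hstate.finite.insert _
  · rw [hrows, Set.ncard_insert_of_notMem (fun h => lt_irrefl b h.2) hstate.finite,
      Nat.cast_succ, hstate.ncard]

lemma IsGreedyState.spend_nsmul (hstate : IsGreedyState d q k N a b)
    (hcoin : IsGreedyCoin d q Q' Q P) (hd : 0 < d) (ha : a < Q') (t : ℕ) (ht : t * Q ≤ a) :
    IsGreedyState d q k (N + t) (a - t * Q) (b + t * P) := by
  induction t with
  | zero => simpa using hstate
  | succ t ih =>
    have hQ := hcoin.value_pos
    push_cast at ht ⊢
    have hlt : a - t * Q < Q' := (sub_le_self a (by positivity)).trans_lt ha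
    convert (ih (by linarith)).spend hcoin hd (by linarith) hlt using 1 <;> ring

lemma IsGreedyState.spend_ediv (hstate : IsGreedyState d q k N a b)
    (hcoin : IsGreedyCoin d q Q' Q P) (hd : 0 < d) (ha : a < Q') :
    IsGreedyState d q k (N + a / Q) (a % Q) (b + a / Q * P) := by
  have hQ := hcoin.value_pos
  obtain ⟨t, ht⟩ := Int.eq_ofNat_of_zero_le (Int.ediv_nonneg hstate.mem.prop.1 hQ.le)
  have hdecomp : a = a % Q + t * Q := by rw [← ht, Int.emod_add_ediv_mul]
  have hrem : a - t * Q = a % Q := by linarith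
  rw [ht, ← hrem]
  exact hstate.spend_nsmul hcoin hd ha t (by linarith [Int.emod_nonneg a hQ.ne'])

lemma IsGreedyState.insert_setOf_pos {r : ℤ} (hstate : IsGreedyState d q k N 0 b)
    (hr : (r, 0) ∈ lattGens d q k) (hr₀ : r ≠ 0) :
    insert (r, 0) {p ∈ lattGens d q k | 0 < p.1 ∧ 0 < p.2} = {p ∈ lattGens d q k | p.2 < b} := by
  have snd_lt_of_fst_pos : ∀ p ∈ lattGens d q k, 0 < p.1 → p.2 < b := by
    intro p hp hp₁
    by_contra! hbp
    exact (hp.le_of_le hstate.mem.prop ⟨hp₁.le, hbp⟩).1.not_gt hp₁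
  ext p
  constructor
  · rintro (rfl | ⟨hp, hp₁, -⟩)
    · exact ⟨hr, snd_lt_of_fst_pos _ hr (hr.prop.1.lt_of_ne' hr₀)⟩
    · exact ⟨hp, snd_lt_of_fst_pos p hp hp₁⟩
  · rintro ⟨hp, hpb⟩
    have hp₁ : 0 < p.1 := by
      by_contra! hp₁
      exact (hstate.mem.le_of_le hp.prop ⟨hp₁, hpb.le⟩).2.not_gt hpb
    rcases hp.prop.2.1.eq_or_lt' with hp₂ | hp₂
    · left
      rcases le_total p.1 r with hle | hle
      · exact hr.eq_of_le hp.prop ⟨hle, hp₂.le⟩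
      · exact hp.eq_of_ge hr.prop ⟨hle, hp₂.ge⟩
    · exact Or.inr ⟨hp, hp₁, hp₂⟩

end GreedyWalk

section RecordMinima

variable {d q Q₀ Q₁ P₀ P₁ x y : ℤ}

lemma exists_eq_add_mul_of_det_eq (hd : d ≠ 0) (hdet : Q₀ * P₁ - Q₁ * P₀ = d)
    (h₀ : d ∣ Q₀ - q * P₀) (h₁ : d ∣ Q₁ - q * P₁) (hxy : d ∣ x - q * y) :
    ∃ α β : ℤ, x = α * Q₀ + β * Q₁ ∧ y = α * P₀ + β * P₁ := by
  obtain ⟨e₀, he₀⟩ := h₀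
  obtain ⟨e₁, he₁⟩ := h₁
  obtain ⟨e, he⟩ := hxy
  -- Cramer's rule
  have hα : x * P₁ - y * Q₁ = d * (e * P₁ - y * e₁) := by linear_combination P₁ * he - y * he₁
  have hβ : Q₀ * y - P₀ * x = d * (y * e₀ - P₀ * e) := by linear_combination y * he₀ - P₀ * he
  refine ⟨e * P₁ - y * e₁, y * e₀ - P₀ * e, mul_left_cancel₀ hd ?_, mul_left_cancel₀ hd ?_⟩
  · linear_combination Q₀ * hα + Q₁ * hβ - x * hdet
  · linear_combination P₀ * hα + P₁ * hβ - y * hdet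

lemma le_of_det_eq (hd : d ≠ 0) (hQ₀ : 0 ≤ Q₀) (hQ : Q₁ < Q₀) (hP₀ : 0 ≤ P₀) (hP : P₀ < P₁)
    (hdet : Q₀ * P₁ - Q₁ * P₀ = d) (h₀ : d ∣ Q₀ - q * P₀) (h₁ : d ∣ Q₁ - q * P₁)
    (hx : 0 ≤ x) (hy : 0 < y) (hyP : y < P₁) (hxy : d ∣ x - q * y) : Q₀ ≤ x := by
  obtain ⟨α, β, rfl, rfl⟩ := exists_eq_add_mul_of_det_eq hd hdet h₀ h₁ hxy
  have hsum : 1 ≤ α + β := by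
    by_contra! hsum
    have hαβ : α ≤ -β := by omega
    rcases lt_or_ge β 0 with hβ | hβ
    · nlinarith
    · obtain rfl : β = 0 := by nlinarith
      nlinarith
  have hβ : β ≤ 0 := by
    by_contra! hβ
    refine hyP.not_ge ?_
    calc P₁ ≤ P₁ + (β - 1) * (P₁ - P₀) :=
          le_add_of_nonneg_right (mul_nonneg (by omega) (by omega))
      _ = (1 - β) * P₀ + β * P₁ := by ring
      _ ≤ α * P₀ + β * P₁ := by gcongr; omega
  calc Q₀ ≤ Q₀ + -β * (Q₀ - Q₁) := le_add_of_nonneg_right (mul_nonneg (by omega) (by omega))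
    _ = (1 - β) * Q₀ + β * Q₁ := by ring
    _ ≤ α * Q₀ + β * Q₁ := by gcongr; omega

end RecordMinima

/-- The numbers `p_0 = 0`, `p_1 = 1`, `p_{i+1} = c_i p_i - p_{i-1}`, which satisfy
`q_i ≡ q p_i (mod d)`. -/
def hjP (C : ℕ → ℤ) : ℕ → ℤ
  | 0 => 0
  | 1 => 1
  | i + 2 => C (i + 1) * hjP C (i + 1) - hjP C i

/-- Hirzebruch–Jung division chain `Q 0 > Q 1 > ⋯ > Q n > Q (n + 1) = 0` with quotients
`C 1, …, C n`; its last nonzero term `Q n` is the gcd of `Q 0` and `Q 1`, not necessarily `1`. -/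
structure IsHJChain (n : ℕ) (Q C : ℕ → ℤ) : Prop where
  top_eq_zero : Q (n + 1) = 0
  succ_lt : ∀ i ≤ n, Q (i + 1) < Q i
  eq_mul_sub : ∀ i < n, Q i = C (i + 1) * Q (i + 1) - Q (i + 2)

namespace IsHJChain

variable {n : ℕ} {Q C : ℕ → ℤ}

lemma pos (h : IsHJChain n Q C) {i : ℕ} (hi : i ≤ n) : 0 < Q i := by
  induction hi using Nat.decreasingInduction with
  | self => exact h.top_eq_zero ▸ h.succ_lt n le_rfl
  | of_succ i hi ih => exact ih.trans (h.succ_lt i hi.le)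

lemma nonneg (h : IsHJChain n Q C) {i : ℕ} (hi : i ≤ n + 1) : 0 ≤ Q i := by
  rcases hi.eq_or_lt with rfl | hi
  · exact h.top_eq_zero.ge
  · exact (h.pos (Nat.le_of_lt_succ hi)).le

lemma two_le (h : IsHJChain n Q C) {i : ℕ} (hi : i < n) : 2 ≤ C (i + 1) := by
  have hlt := h.succ_lt i hi.le
  have hpos := h.pos hi
  have hnonneg : 0 ≤ Q (i + 2) := h.nonneg (by omega)
  by_contra! hC
  nlinarith [h.eq_mul_sub i hi]

lemma gcd_eq (h : IsHJChain n Q C) {i : ℕ} (hi : i ≤ n) :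
    Int.gcd (Q i) (Q (i + 1)) = Int.gcd (Q 0) (Q 1) := by
  induction i with
  | zero => rfl
  | succ i ih => rw [← ih (by omega), h.eq_mul_sub i hi, Int.gcd_mul_right_sub_left, Int.gcd_comm]

lemma last_eq_gcd (h : IsHJChain n Q C) : Q n = Int.gcd (Q 0) (Q 1) := by
  rw [← h.gcd_eq le_rfl, h.top_eq_zero, Int.gcd_zero_right, Int.natAbs_of_nonneg (h.pos le_rfl).le]

lemma hjP_nonneg_and_lt_succ (h : IsHJChain n Q C) {i : ℕ} (hi : i ≤ n) :
    0 ≤ hjP C i ∧ hjP C i < hjP C (i + 1) := by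
  induction i with
  | zero => simp [hjP]
  | succ i ih =>
    obtain ⟨hnonneg, hlt⟩ := ih (by omega)
    have hC := h.two_le hi
    refine ⟨by omega, ?_⟩
    rw [hjP]
    nlinarith

lemma det_eq (h : IsHJChain n Q C) {i : ℕ} (hi : i ≤ n) :
    Q i * hjP C (i + 1) - Q (i + 1) * hjP C i = Q 0 := by
  induction i with
  | zero => simp [hjP]
  | succ i ih =>
    rw [hjP]
    linear_combination ih (by omega) - hjP C (i + 1) * h.eq_mul_sub i hi

lemma dvd_sub_mul_hjP (h : IsHJChain n Q C) {i : ℕ} (hi : i ≤ n + 1) :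
    Q 0 ∣ Q i - Q 1 * hjP C i := by
  induction i using Nat.twoStepInduction with
  | zero => simp [hjP]
  | one => simp [hjP]
  | more i ih₀ ih₁ =>
    rw [hjP]
    have hrec := h.eq_mul_sub i (by omega)
    exact (dvd_sub ((ih₁ (by omega)).mul_left (C (i + 1))) (ih₀ (by omega))).trans
      (dvd_of_eq (by linear_combination -hrec))

lemma isGreedyCoin (h : IsHJChain n Q C) {i : ℕ} (hi : i < n) :
    IsGreedyCoin (Q 0) (Q 1) (Q i) (Q (i + 1)) (hjP C (i + 1)) := by
  obtain ⟨hnonneg, hlt⟩ := h.hjP_nonneg_and_lt_succ hi.le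
  have hdvd : Q 0 ∣ Q (i + 1) - Q 1 * hjP C (i + 1) := h.dvd_sub_mul_hjP (by omega)
  exact ⟨h.pos hi, hnonneg.trans_lt hlt, hdvd, fun x y hx hy hyP hxy =>
    le_of_det_eq (h.pos (Nat.zero_le n)).ne' (h.pos hi.le).le (h.succ_lt i hi.le) hnonneg hlt
      (h.det_eq hi.le) (h.dvd_sub_mul_hjP (by omega)) hdvd hx hy hyP hxy⟩

lemma hjRem_lt (h : IsHJChain n Q C) (k : ℤ) {i : ℕ} (hi : i ≤ n) : hjRem Q k i < Q i := by
  cases i <;> exact Int.emod_lt_of_pos _ (h.pos hi)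

lemma exists_isGreedyState_hjRem (h : IsHJChain n Q C) (k : ℤ) {i : ℕ} (hi : i ≤ n) :
    ∃ b, IsGreedyState (Q 0) (Q 1) k (∑ j ∈ Finset.Icc 1 i, hjGreedy Q k j) (hjRem Q k i) b := by
  have hd : 0 < Q 0 := h.pos (Nat.zero_le n)
  induction i with
  | zero => exact ⟨0, IsGreedyState.initial hd k⟩
  | succ i ih =>
    obtain ⟨b, hb⟩ := ih (by omega)
    rw [Finset.sum_Icc_succ_top (by omega)]
    exact ⟨_, hb.spend_ediv (h.isGreedyCoin hi) hd (h.hjRem_lt k (by omega))⟩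

lemma exists_isGreedyState_zero (h : IsHJChain n Q C) {k : ℤ}
    (hgcd : (Int.gcd (Q 0) (Q 1) : ℤ) ∣ k) :
    ∃ b, IsGreedyState (Q 0) (Q 1) k (∑ i ∈ Finset.Icc 1 n, hjGreedy Q k i) 0 b := by
  obtain ⟨b, hb⟩ := h.exists_isGreedyState_hjRem k le_rfl
  have hdvd : Q n ∣ hjRem Q k n := h.last_eq_gcd ▸ gcd_dvd_fst_of_mem_latt hgcd hb.mem.prop
  have hzero : hjRem Q k n = 0 :=
    Int.eq_zero_of_dvd_of_nonneg_of_lt hb.mem.prop.1 (h.hjRem_lt k le_rfl) hdvd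
  exact ⟨b, hzero ▸ hb⟩

end IsHJChain

theorem LR_logarithmic_codimension_general {n : ℕ} {Q C : ℕ → ℤ} (h : IsHJChain n Q C) {k : ℤ}
    (hgcd : (Int.gcd (Q 0) (Q 1) : ℤ) ∣ k) (hk : ¬ Q 0 ∣ k) :
    (latt (Q 0) (Q 1) ((k + (Q 0 - 1 - Q 1)) % Q 0) \
        (latt (Q 0) (Q 1) k + latt (Q 0) (Q 1) (Q 0 - 1 - Q 1))).Finite ∧
    ((latt (Q 0) (Q 1) ((k + (Q 0 - 1 - Q 1)) % Q 0) \
        (latt (Q 0) (Q 1) k + latt (Q 0) (Q 1) (Q 0 - 1 - Q 1))).ncard : ℤ)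
      = (∑ i ∈ Finset.Icc 1 n, hjGreedy Q k i) - 1 := by
  obtain ⟨b, hb⟩ := h.exists_isGreedyState_zero hgcd
  have hstart := IsGreedyState.initial (q := Q 1) (h.pos (Nat.zero_le n)) k
  have hrows := hb.insert_setOf_pos hstart.mem fun h0 => hk (Int.dvd_of_emod_eq_zero h0)
  have hfin : {p ∈ lattGens (Q 0) (Q 1) k | 0 < p.1 ∧ 0 < p.2}.Finite :=
    hb.finite.subset (hrows ▸ Set.subset_insert _ _)
  have hcard := hb.ncard
  rw [← hrows, Set.ncard_insert_of_notMem (fun hp => lt_irrefl 0 hp.2.2) hfin,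
    Nat.cast_succ] at hcard
  rw [latt_emod, ← Set.finite_vadd_set (a := ((1, 1) : ℤ × ℤ)),
    ← Set.ncard_vadd_set ((1, 1) : ℤ × ℤ), vadd_latt_sdiff_eq hgcd]
  exact ⟨hfin, eq_sub_of_add_eq hcard⟩

/-- **Hirzebruch–Jung data** of `d/q` for coprime `d > q ≥ 1`:
`q_0 = d > q_1 = q > ⋯ > q_n = 1 > q_{n+1} = 0`, `c_i ≥ 2` with
`q_{i-1} = c_i q_i − q_{i+1}`.

**Statement:** let `0 < k < d` have greedy `X`-decomposition `(k_1, …, k_n)`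
and `‖k‖₁ = Σ k_i`, let `w := d − 1 − q` and `k'` the residue of `k + w`
mod `d`.  Then `𝕃(k') \ (𝕃(k) ⊕ 𝕃(w))` (Minkowski sum) is finite with exactly
`‖k‖₁ − 1` elements.  (Combinatorial core of
`𝓜^nul_f = 𝒪_X(k) ⊗ 𝒪_X(w)` for a generic germ `f` of degree `k`:
`dim_ℂ 𝒪_X(k+w)/(𝒪_X(k)⊗𝒪_X(w)) = ‖k‖₁ − 1`.) -/
theorem LR_logarithmic_codimension
    (n : ℕ) (d q : ℤ) (Q C : ℕ → ℤ)
    (hn : 1 ≤ n) (hq1 : 1 ≤ q) (hqd : q < d) (hcop : Int.gcd d q = 1)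
    (hQ0 : Q 0 = d) (hQ1 : Q 1 = q) (hQn : Q n = 1) (hQtop : Q (n + 1) = 0)
    (hQdec : ∀ i, i ≤ n → Q (i + 1) < Q i)
    (hC : ∀ i, 1 ≤ i → i ≤ n → Q (i - 1) = C i * Q i - Q (i + 1))
    (hC2 : ∀ i, 1 ≤ i → i ≤ n → 2 ≤ C i)
    (k : ℤ) (hk0 : 0 < k) (hkd : k < d) :
    (latt d q ((k + (d - 1 - q)) % d) \
        (latt d q k + latt d q (d - 1 - q))).Finite ∧
    ((latt d q ((k + (d - 1 - q)) % d) \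
        (latt d q k + latt d q (d - 1 - q))).ncard : ℤ)
      = (∑ i ∈ Finset.Icc 1 n, hjGreedy Q k i) - 1 := by
  subst hQ0 hQ1
  have hchain : IsHJChain n Q C :=
    ⟨hQtop, hQdec, fun i hi => hC (i + 1) (Nat.le_add_left 1 i) hi⟩
  exact LR_logarithmic_codimension_general hchain (by simp [hcop])
    fun h => (Int.le_of_dvd hk0 h).not_gt hkd
end
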